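/- Let Q_8 be the quaternion group of order 8 and n ≥ 3. Then the Schur multiplier of G = Q_8 × (ℤ_2)^{n-3} has order 2^{(n-1)(n-2)/2 - 1}. -/

import Mathlib

/-- The kernel of the canonical free presentation `FreeGroup G → G`. -/
def presentationKernel (G : Type u) [Group G] : Subgroup (FreeGroup G) :=
  (FreeGroup.lift (id : G → G)).ker

/-- The Schur multiplier `M(G) = H₂(G, ℤ)` (second integral group homology) of a
group `G`, realised via Hopf's integral formula `H₂(G, ℤ) ≅ (R ⊓ [F, F]) / [F, R]`,
where `F = FreeGroup G` is the canonical free group surjecting onto `G` with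
kernel `R`. -/
def SchurMultiplier (G : Type u) [Group G] : Type u :=
  ↥(presentationKernel G ⊓ commutator (FreeGroup G)) ⧸
    (⁅(⊤ : Subgroup (FreeGroup G)), presentationKernel G⁆.subgroupOf
      (presentationKernel G ⊓ commutator (FreeGroup G)))

/-- A finite `p`-group `H` is extraspecial if its center, derived subgroup and
Frattini subgroup coincide and have order `p`. -/
def IsExtraspecial (p : ℕ) (H : Type*) [Group H] : Prop :=
  Subgroup.center H = commutator H ∧ Subgroup.center H = frattini H ∧
    Nat.card (Subgroup.center H) = p

/-!
Lifting a free presentation of `G` to a central extension `p : E → G` maps `M(G)` onto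
`p.ker ⊓ [E, E]`, and isomorphically for `E = F / [F, R]`; so `|M(G)|` is bounded below by
producing central extensions and bounded above by computing commutators in all of them.

For a product, commutators of lifts of the two factors depend bimultiplicatively on the elements
lifted, and conversely the Heisenberg group of a pairing realises any such dependence. This gives
`|M(A × B)| = |M(A)| |M(B)| |Aᵃᵇ ⊗ Bᵃᵇ|`.

In a central extension of `Q = QuaternionGroup n`, lifts `t`, `u` of `a 1`, `xa 0` have commutator
`s = ⁅u, t⁆` generating the commutator subgroup, and `s ^ n = ⁅u, t ^ n⁆ = ⁅u, u ^ 2⁆ = 1`. As the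
image of `s` in `Q` already has order `n`, the multiplier of `Q` is trivial.
-/

open scoped commutatorElement TensorProduct

section Subgroups

variable {G : Type*} [Group G]

lemma commutator_sup_left (H K L : Subgroup G) [H.Normal] [K.Normal] [L.Normal] :
    ⁅H ⊔ K, L⁆ = ⁅H, L⁆ ⊔ ⁅K, L⁆ := by
  refine le_antisymm (Subgroup.commutator_le.2 fun x hx l hl => ?_)
    (sup_le (Subgroup.commutator_mono le_sup_left le_rfl)
      (Subgroup.commutator_mono le_sup_right le_rfl))
  obtain ⟨h, hh, k, hk, rfl⟩ := Subgroup.mem_sup_of_normal_right.1 hx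
  rw [commutatorElement_mul_left_eq_conj_mul]
  exact mul_mem
    (Subgroup.mem_sup_right (Subgroup.Normal.conj_mem inferInstance _
      (Subgroup.commutator_mem_commutator hk hl) h))
    (Subgroup.mem_sup_left (Subgroup.commutator_mem_commutator hh hl))

lemma commutator_eq_of_sup_eq_top {H K : Subgroup G} [H.Normal] [K.Normal] (h : H ⊔ K = ⊤) :
    commutator G = ⁅H, H⁆ ⊔ ⁅K, K⁆ ⊔ ⁅H, K⁆ := by
  rw [commutator_def, ← h, commutator_sup_left, Subgroup.commutator_comm H (H ⊔ K),
    Subgroup.commutator_comm K (H ⊔ K), commutator_sup_left, commutator_sup_left,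
    Subgroup.commutator_comm K H, sup_comm ⁅H, K⁆ ⁅K, K⁆, ← sup_sup_distrib_right]

lemma map_mem_commutator {H : Type*} [Group H] (f : G →* H) {x : G} (hx : x ∈ commutator G) :
    f x ∈ commutator H :=
  (map_commutator_eq G f).trans_le (Subgroup.commutator_mono le_top le_top)
    (Subgroup.mem_map_of_mem f hx)

lemma card_sup_dvd (H K : Subgroup G) [K.Normal] :
    Nat.card ↥(H ⊔ K) ∣ Nat.card H * Nat.card K := by
  rw [← Subgroup.relIndex_bot_left (H ⊔ K),
    ← Subgroup.relIndex_mul_relIndex ⊥ K (H ⊔ K) bot_le le_sup_right,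
    Subgroup.relIndex_bot_left, Subgroup.relIndex_sup_right, mul_comm]
  exact mul_dvd_mul_right (Subgroup.relIndex_dvd_card K H) _

end Subgroups

/-- A central extension of `G`: an epimorphism onto `G` whose kernel is central. -/
structure IsCentralExtension {E G : Type*} [Group E] [Group G] (p : E →* G) : Prop where
  surjective : Function.Surjective p
  ker_le_center : p.ker ≤ Subgroup.center E

namespace IsCentralExtension

variable {E G A B : Type*} [Group E] [Group G] [Group A] [Group B] {p : E →* G}

lemma mul_inv_mem_center (hp : IsCentralExtension p) {x y : E} (h : p x = p y) :
    x * y⁻¹ ∈ Subgroup.center E :=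
  hp.ker_le_center (by rw [MonoidHom.mem_ker, map_mul, map_inv, h, mul_inv_cancel])

lemma commutatorElement_congr (hp : IsCentralExtension p) {x x' y y' : E}
    (hx : p x = p x') (hy : p y = p y') : ⁅x, y⁆ = ⁅x', y'⁆ := by
  have left {a a' : E} (b : E) (h : p a = p a') : ⁅a, b⁆ = ⁅a', b⁆ := by
    have hc := Subgroup.mem_center_iff.1 (hp.mul_inv_mem_center h)
    calc ⁅a, b⁆ = ⁅a * a'⁻¹ * a', b⁆ := by rw [inv_mul_cancel_right]
      _ = ⁅a', b⁆ := by
        rw [commutatorElement_mul_left_eq_conj_mul, ← hc, mul_inv_cancel_right,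
          commutatorElement_eq_one_iff_mul_comm.2 (hc b).symm, mul_one]
  rw [left y hx, ← commutatorElement_inv, left x' hy, commutatorElement_inv]

lemma commutatorElement_mem_center (hp : IsCentralExtension p) {x y : E}
    (h : Commute (p x) (p y)) : ⁅x, y⁆ ∈ Subgroup.center E :=
  hp.ker_le_center (by
    rw [MonoidHom.mem_ker, map_commutatorElement, commutatorElement_eq_one_iff_commute.2 h])

lemma commutatorElement_mul_left (hp : IsCentralExtension p) {x x' y : E}
    (h : Commute (p x') (p y)) : ⁅x * x', y⁆ = ⁅x, y⁆ * ⁅x', y⁆ := by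
  have hc := Subgroup.mem_center_iff.1 (hp.commutatorElement_mem_center h)
  rw [commutatorElement_mul_left_eq_conj_mul, hc x, mul_inv_cancel_right, ← hc]

lemma commutatorElement_mul_right (hp : IsCentralExtension p) {x y y' : E}
    (h : Commute (p x) (p y')) : ⁅x, y * y'⁆ = ⁅x, y⁆ * ⁅x, y'⁆ := by
  have hc := Subgroup.mem_center_iff.1 (hp.commutatorElement_mem_center h)
  rw [commutatorElement_mul_right_eq_mul_conj, mul_assoc ⁅x, y⁆, hc y, mul_assoc,
    mul_inv_cancel_right]

lemma comp_mulEquiv (hp : IsCentralExtension p) (e : G ≃* A) :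
    IsCentralExtension ((e : G →* A).comp p) where
  surjective := e.surjective.comp hp.surjective
  ker_le_center := by rw [MonoidHom.ker_mulEquiv_comp]; exact hp.ker_le_center

lemma subgroupComap (hp : IsCentralExtension p) (H : Subgroup G) :
    IsCentralExtension (p.subgroupComap H) where
  surjective := p.subgroupComap_surjective_of_surjective H hp.surjective
  ker_le_center _ hx := Subgroup.mem_center_iff.2 fun y => Subtype.ext
    (Subgroup.mem_center_iff.1 (hp.ker_le_center (congrArg Subtype.val hx)) y)

/-- Lifting the generators of `FreeGroup G` to `E` identifies `p.ker ⊓ commutator E` with a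
quotient of the Schur multiplier of `G`. -/
theorem card_ker_inf_commutator_dvd (hp : IsCentralExtension p) :
    Nat.card ↥(p.ker ⊓ commutator E) ∣ Nat.card (SchurMultiplier G) := by
  let s := Function.surjInv hp.surjective
  have hs : ∀ g, p (s g) = g := Function.surjInv_eq hp.surjective
  let φ : FreeGroup G →* E := FreeGroup.lift s
  have hpφ : p.comp φ = FreeGroup.lift (id : G → G) := by ext g; simp [φ, hs]
  have hφR : ∀ r ∈ presentationKernel G, φ r ∈ p.ker := fun r hr => by
    rw [MonoidHom.mem_ker, ← MonoidHom.comp_apply, hpφ]; exact hr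
  have hφ : ⁅⊤, presentationKernel G⁆ ≤ φ.ker := Subgroup.commutator_le.2 fun x _ r hr => by
    rw [MonoidHom.mem_ker, map_commutatorElement, commutatorElement_eq_one_iff_mul_comm]
    exact Subgroup.mem_center_iff.1 (hp.ker_le_center (hφR r hr)) _
  have hcomm : commutator E ≤ (commutator (FreeGroup G)).map φ :=
    Subgroup.commutator_le.2 fun x _ y _ => by
      refine ⟨⁅FreeGroup.of (p x), FreeGroup.of (p y)⁆,
        Subgroup.commutator_mem_commutator trivial trivial, ?_⟩
      rw [map_commutatorElement]
      exact hp.commutatorElement_congr (by simp [φ, hs]) (by simp [φ, hs])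
  have himage : p.ker ⊓ commutator E ≤
      (presentationKernel G ⊓ commutator (FreeGroup G)).map φ := by
    rintro w ⟨hw, hwE⟩
    obtain ⟨x, hx, rfl⟩ := hcomm hwE
    exact ⟨x, ⟨(DFunLike.congr_fun hpφ x).symm.trans hw, hx⟩, rfl⟩
  calc Nat.card ↥(p.ker ⊓ commutator E)
    _ ∣ Nat.card ↥((presentationKernel G ⊓ commutator (FreeGroup G)).map φ) :=
      Subgroup.card_dvd_of_le himage
    _ = φ.ker.relIndex (presentationKernel G ⊓ commutator (FreeGroup G)) :=
      (Subgroup.relIndex_ker ..).symm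
    _ ∣ Nat.card (SchurMultiplier G) := Subgroup.relIndex_dvd_of_le_left _ hφ

lemma card_inf_commutator_comap_range_dvd (hp : IsCentralExtension p) {f : A →* G}
    (hf : Function.Injective f) :
    Nat.card ↥(p.ker ⊓ ⁅f.range.comap p, f.range.comap p⁆) ∣ Nat.card (SchurMultiplier A) := by
  set H := f.range.comap p
  let q : H →* A := ((MonoidHom.ofInjective hf).symm : f.range →* A).comp (p.subgroupComap f.range)
  have hq : IsCentralExtension q := (hp.subgroupComap f.range).comp_mulEquiv _
  have hle : p.ker ⊓ ⁅H, H⁆ ≤ (q.ker ⊓ commutator H).map H.subtype := by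
    rintro x ⟨hx, hxH⟩
    rw [← Subgroup.map_subtype_commutator] at hxH
    obtain ⟨y, hy, rfl⟩ := hxH
    have hyq : y ∈ q.ker := by
      rw [MonoidHom.ker_mulEquiv_comp]
      exact Subtype.ext hx
    exact ⟨y, ⟨hyq, hy⟩, rfl⟩
  exact (Subgroup.card_dvd_of_le hle).trans
    ((Subgroup.card_map_dvd _ _).trans hq.card_ker_inf_commutator_dvd)

end IsCentralExtension

instance normal_presentationKernel (G : Type*) [Group G] : (presentationKernel G).Normal :=
  MonoidHom.normal_ker _

/-- The central extension `F / [F, R] → G` for the canonical presentation `G = F / R`; Hopf's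
formula reads off the Schur multiplier of `G` as its kernel intersected with the commutator
subgroup. -/
def hopfExtension (G : Type*) [Group G] :
    FreeGroup G ⧸ ⁅(⊤ : Subgroup (FreeGroup G)), presentationKernel G⁆ →* G :=
  QuotientGroup.lift _ (FreeGroup.lift id) (Subgroup.commutator_le_right _ _)

section HopfExtension

variable (G : Type*) [Group G]

lemma isCentralExtension_hopfExtension : IsCentralExtension (hopfExtension G) where
  surjective g := ⟨QuotientGroup.mk (FreeGroup.of g), FreeGroup.lift_apply_of⟩
  ker_le_center := by
    intro w hw
    obtain ⟨r, rfl⟩ := QuotientGroup.mk'_surjective _ w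
    refine Subgroup.mem_center_iff.2 fun y => ?_
    obtain ⟨x, rfl⟩ := QuotientGroup.mk'_surjective _ y
    rw [← commutatorElement_eq_one_iff_mul_comm, ← map_commutatorElement]
    exact (QuotientGroup.eq_one_iff _).2 (Subgroup.commutator_mem_commutator trivial hw)

theorem card_ker_inf_commutator_hopfExtension :
    Nat.card ↥((hopfExtension G).ker ⊓ commutator _) = Nat.card (SchurMultiplier G) := by
  refine Nat.dvd_antisymm (isCentralExtension_hopfExtension G).card_ker_inf_commutator_dvd ?_
  set C := ⁅(⊤ : Subgroup (FreeGroup G)), presentationKernel G⁆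
  calc Nat.card (SchurMultiplier G)
    _ = (QuotientGroup.mk' C).ker.relIndex (presentationKernel G ⊓ commutator (FreeGroup G)) := by
      rw [QuotientGroup.ker_mk']; rfl
    _ = Nat.card ↥((presentationKernel G ⊓ commutator (FreeGroup G)).map (QuotientGroup.mk' C)) :=
      Subgroup.relIndex_ker ..
    _ ∣ Nat.card ↥((hopfExtension G).ker ⊓ commutator _) := Subgroup.card_dvd_of_le ?_
  rintro _ ⟨x, ⟨hxR, hxF⟩, rfl⟩
  exact ⟨hxR, map_mem_commutator _ hxF⟩

end HopfExtension

section IsomorphismInvariance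

variable {G H : Type*} [Group G] [Group H]

lemma card_schurMultiplier_dvd_of_mulEquiv (e : G ≃* H) :
    Nat.card (SchurMultiplier G) ∣ Nat.card (SchurMultiplier H) := by
  rw [← card_ker_inf_commutator_hopfExtension, ← MonoidHom.ker_mulEquiv_comp _ e]
  exact ((isCentralExtension_hopfExtension G).comp_mulEquiv e).card_ker_inf_commutator_dvd

lemma card_schurMultiplier_congr (e : G ≃* H) :
    Nat.card (SchurMultiplier G) = Nat.card (SchurMultiplier H) :=
  Nat.dvd_antisymm (card_schurMultiplier_dvd_of_mulEquiv e)
    (card_schurMultiplier_dvd_of_mulEquiv e.symm)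

lemma card_schurMultiplier_of_isCyclic [IsCyclic G] : Nat.card (SchurMultiplier G) = 1 := by
  have := (hopfExtension G).isMulCommutative_of_isCyclic_of_ker_le_center
    (isCentralExtension_hopfExtension G).ker_le_center
  rw [← card_ker_inf_commutator_hopfExtension, commutator_eq_bot, inf_bot_eq, Subgroup.card_bot]

end IsomorphismInvariance

section CommutatorPairing

open scoped IsMulCommutative

variable {E G A B : Type*} [Group E] [Group G] [Group A] [Group B] {p : E →* G}

/-- The pairing `(a, b) ↦ ⁅x, y⁆`, where `x` and `y` lift the commuting elements `f a` and `g b`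
of `G` to a central extension of `G`; it does not depend on the choice of the lifts. -/
noncomputable def IsCentralExtension.commutatorPairing (hp : IsCentralExtension p) (f : A →* G)
    (g : B →* G) (hfg : ∀ a b, Commute (f a) (g b)) : A →* B →* Subgroup.center E :=
  let s := Function.surjInv hp.surjective
  have hs : ∀ x, p (s x) = x := Function.surjInv_eq hp.surjective
  have hs_comm (a : A) (b : B) : Commute (p (s (f a))) (p (s (g b))) := by
    simpa only [hs] using hfg a b
  MonoidHom.mk' (fun a => MonoidHom.mk'
    (fun b => ⟨⁅s (f a), s (g b)⁆, hp.commutatorElement_mem_center (hs_comm a b)⟩)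
    (fun b b' => Subtype.ext <|
      (hp.commutatorElement_congr rfl (by simp only [map_mul, hs])).trans
        (hp.commutatorElement_mul_right (hs_comm a b'))))
    (fun a a' => MonoidHom.ext fun b => Subtype.ext <|
      (hp.commutatorElement_congr (by simp only [map_mul, hs]) rfl).trans
        (hp.commutatorElement_mul_left (hs_comm a' b)))

lemma IsCentralExtension.coe_commutatorPairing (hp : IsCentralExtension p) {f : A →* G}
    {g : B →* G} (hfg : ∀ a b, Commute (f a) (g b)) {a : A} {b : B} {x y : E}
    (hx : p x = f a) (hy : p y = g b) :
    (hp.commutatorPairing f g hfg a b : E) = ⁅x, y⁆ :=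
  hp.commutatorElement_congr ((Function.surjInv_eq hp.surjective _).trans hx.symm)
    ((Function.surjInv_eq hp.surjective _).trans hy.symm)

end CommutatorPairing

/-- The tensor product of the abelianizations of `A` and `B`, written multiplicatively: the target
of the universal bimultiplicative pairing on `A × B`. -/
abbrev AbelianizationTensor (A B : Type*) [Group A] [Group B] :=
  Multiplicative (Additive (Abelianization A) ⊗[ℤ] Additive (Abelianization B))

namespace AbelianizationTensor

variable {A B Z : Type*} [Group A] [Group B] [CommGroup Z]

/-- The universal bimultiplicative pairing on `A × B`. -/
def mk (A B : Type*) [Group A] [Group B] : A →* B →* AbelianizationTensor A B :=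
  MonoidHom.mk' (fun a => MonoidHom.mk'
    (fun b => .ofAdd (.ofMul (Abelianization.of a) ⊗ₜ .ofMul (Abelianization.of b)))
    (fun b b' => by rw [map_mul, ofMul_mul, TensorProduct.tmul_add, ofAdd_add]))
    (fun a a' => MonoidHom.ext fun b => by
      simp only [map_mul, ofMul_mul, TensorProduct.add_tmul, ofAdd_add, MonoidHom.mk'_apply,
        MonoidHom.mul_apply])

lemma closure_mk_eq_top :
    Subgroup.closure {t | ∃ a b, mk A B a b = t} = ⊤ := by
  refine eq_top_iff.2 fun t _ => ?_
  induction t using Multiplicative.rec with | _ t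
  induction t using TensorProduct.induction_on with
  | zero => exact one_mem _
  | add s t hs ht => exact mul_mem (hs trivial) (ht trivial)
  | tmul x y =>
    obtain ⟨a, rfl⟩ := QuotientGroup.mk_surjective x.toMul
    obtain ⟨b, rfl⟩ := QuotientGroup.mk_surjective y.toMul
    exact Subgroup.subset_closure ⟨a, b, rfl⟩

/-- The homomorphism out of the tensor product induced by a bimultiplicative pairing. -/
def lift (β : A →* B →* Z) : AbelianizationTensor A B →* Z :=
  let β' : Abelianization A →* Abelianization B →* Z := Abelianization.lift <|
    MonoidHom.mk' (fun a => Abelianization.lift (β a)) fun a a' => by ext b; simp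
  AddMonoidHom.toMultiplicativeLeft <| TensorProduct.liftAddHom
    (AddMonoidHom.mk' (fun x => MonoidHom.toAdditive (β' x.toMul)) fun x x' => by
      ext y; simp)
    fun r x y => by
      rw [map_zsmul, map_zsmul, AddMonoidHom.zsmul_apply]

lemma lift_mk (β : A →* B →* Z) (a : A) (b : B) : lift β (mk A B a b) = β a b := rfl

lemma card_closure_dvd (β : A →* B →* Z) :
    Nat.card (Subgroup.closure {z | ∃ a b, β a b = z}) ∣ Nat.card (AbelianizationTensor A B) := by
  refine (Subgroup.card_dvd_of_le ?_).trans (Subgroup.card_range_dvd (lift β))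
  rw [Subgroup.closure_le]
  rintro _ ⟨a, b, rfl⟩
  exact ⟨_, lift_mk β a b⟩

end AbelianizationTensor


section Kunneth

variable {A B E : Type*} [Group A] [Group B] [Group E] {p : E →* A × B}

instance normal_range_inl : (MonoidHom.inl A B).range.Normal where
  conj_mem := by rintro _ ⟨a, rfl⟩ ⟨a', b⟩; exact ⟨a' * a * a'⁻¹, by simp⟩

instance normal_range_inr : (MonoidHom.inr A B).range.Normal where
  conj_mem := by rintro _ ⟨b, rfl⟩ ⟨a, b'⟩; exact ⟨b' * b * b'⁻¹, by simp⟩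

namespace IsCentralExtension

open scoped IsMulCommutative in
lemma card_commutator_comap_range_inl_inr_dvd (hp : IsCentralExtension p) :
    Nat.card ↥⁅(MonoidHom.inl A B).range.comap p, (MonoidHom.inr A B).range.comap p⁆ ∣
      Nat.card (AbelianizationTensor A B) := by
  have hcomm := MonoidHom.commute_inl_inr (M := A) (N := B)
  let β := hp.commutatorPairing (.inl A B) (.inr A B) hcomm
  have hle : ⁅(MonoidHom.inl A B).range.comap p, (MonoidHom.inr A B).range.comap p⁆ ≤
      (Subgroup.closure {z | ∃ a b, β a b = z}).map (Subgroup.center E).subtype :=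
    Subgroup.commutator_le.2 fun x ⟨a, ha⟩ y ⟨b, hb⟩ =>
      ⟨β a b, Subgroup.subset_closure ⟨a, b, rfl⟩,
        hp.coe_commutatorPairing hcomm ha.symm hb.symm⟩
  exact (Subgroup.card_dvd_of_le hle).trans
    ((Subgroup.card_map_dvd _ _).trans (AbelianizationTensor.card_closure_dvd β))

lemma comap_range_inl_sup_comap_range_inr (hp : IsCentralExtension p) :
    (MonoidHom.inl A B).range.comap p ⊔ (MonoidHom.inr A B).range.comap p = ⊤ := by
  rw [Subgroup.comap_sup_eq _ _ _ hp.surjective, eq_top_iff]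
  rintro x -
  exact Subgroup.mem_sup_of_normal_right.2
    ⟨_, ⟨(p x).1, rfl⟩, _, ⟨(p x).2, rfl⟩, Prod.fst_mul_snd (p x)⟩

lemma ker_inf_commutator_le_sup (hp : IsCentralExtension p) :
    let H := (MonoidHom.inl A B).range.comap p
    let K := (MonoidHom.inr A B).range.comap p
    p.ker ⊓ commutator E ≤ (p.ker ⊓ ⁅H, H⁆) ⊔ (p.ker ⊓ ⁅K, K⁆) ⊔ ⁅H, K⁆ := by
  intro H K
  rw [commutator_eq_of_sup_eq_top hp.comap_range_inl_sup_comap_range_inr]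
  have hHK : ⁅H, K⁆ ≤ p.ker := Subgroup.commutator_le.2 fun h ⟨c, hc⟩ k ⟨d, hd⟩ => by
    rw [MonoidHom.mem_ker, map_commutatorElement, ← hc, ← hd]
    exact commutatorElement_eq_one_iff_commute.2 (MonoidHom.commute_inl_inr c d)
  rintro _ ⟨hw, hw'⟩
  obtain ⟨_, hxy, z, hz, rfl⟩ := Subgroup.mem_sup_of_normal_right.1 hw'
  obtain ⟨x, hx, y, hy, rfl⟩ := Subgroup.mem_sup_of_normal_right.1 hxy
  obtain ⟨a, ha⟩ := Subgroup.commutator_le_left H H hx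
  obtain ⟨b, hb⟩ := Subgroup.commutator_le_left K K hy
  have hab : (a, b) = 1 := by
    simpa [MonoidHom.mem_ker, ← ha, ← hb, MonoidHom.mem_ker.1 (hHK hz)] using hw
  obtain ⟨rfl, rfl⟩ := Prod.mk_eq_one.1 hab
  exact mul_mem (Subgroup.mem_sup_left (Subgroup.mul_mem_sup ⟨ha.symm, hx⟩ ⟨hb.symm, hy⟩))
    (Subgroup.mem_sup_right hz)

theorem card_ker_inf_commutator_prod_dvd (hp : IsCentralExtension p) :
    Nat.card ↥(p.ker ⊓ commutator E) ∣ Nat.card (SchurMultiplier A) *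
      Nat.card (SchurMultiplier B) * Nat.card (AbelianizationTensor A B) := by
  refine (Subgroup.card_dvd_of_le hp.ker_inf_commutator_le_sup).trans
    ((card_sup_dvd _ _).trans (mul_dvd_mul ((card_sup_dvd _ _).trans (mul_dvd_mul ?_ ?_)) ?_))
  · exact hp.card_inf_commutator_comap_range_dvd fun _ _ h => (Prod.mk.inj h).1
  · exact hp.card_inf_commutator_comap_range_dvd fun _ _ h => (Prod.mk.inj h).2
  · exact hp.card_commutator_comap_range_inl_inr_dvd

end IsCentralExtension

end Kunneth

/-- The central extension of `X × Y` by `Z` with cocycle `((x, y), (x', y')) ↦ β x y'`, for a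
bimultiplicative pairing `β : X →* Y →* Z`. -/
@[ext]
structure HeisenbergGroup {X Y Z : Type*} [Group X] [Group Y] [CommGroup Z]
    (β : X →* Y →* Z) where
  left : X
  right : Y
  center : Z

namespace HeisenbergGroup

variable {X Y Z : Type*} [Group X] [Group Y] [CommGroup Z] (β : X →* Y →* Z)

instance : Mul (HeisenbergGroup β) :=
  ⟨fun g h => ⟨g.left * h.left, g.right * h.right, g.center * h.center * β g.left h.right⟩⟩

instance : One (HeisenbergGroup β) := ⟨⟨1, 1, 1⟩⟩

instance : Inv (HeisenbergGroup β) :=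
  ⟨fun g => ⟨g.left⁻¹, g.right⁻¹, g.center⁻¹ * β g.left g.right⟩⟩

variable {β}

@[simp] lemma left_mul (g h : HeisenbergGroup β) : (g * h).left = g.left * h.left := rfl
@[simp] lemma right_mul (g h : HeisenbergGroup β) : (g * h).right = g.right * h.right := rfl
@[simp] lemma center_mul (g h : HeisenbergGroup β) :
    (g * h).center = g.center * h.center * β g.left h.right := rfl
@[simp] lemma left_one : (1 : HeisenbergGroup β).left = 1 := rfl
@[simp] lemma right_one : (1 : HeisenbergGroup β).right = 1 := rfl
@[simp] lemma center_one : (1 : HeisenbergGroup β).center = 1 := rfl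
@[simp] lemma left_inv (g : HeisenbergGroup β) : g⁻¹.left = g.left⁻¹ := rfl
@[simp] lemma right_inv (g : HeisenbergGroup β) : g⁻¹.right = g.right⁻¹ := rfl
@[simp] lemma center_inv (g : HeisenbergGroup β) :
    g⁻¹.center = g.center⁻¹ * β g.left g.right := rfl

instance : Group (HeisenbergGroup β) :=
  Group.ofLeftAxioms
    (fun g h k => by ext <;> simp [mul_assoc, mul_left_comm, mul_comm])
    (fun g => by ext <;> simp)
    (fun g => by ext <;> simp)

variable (β) in
/-- The inclusion of the left factor. -/
def inl : X →* HeisenbergGroup β :=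
  MonoidHom.mk' (fun x => ⟨x, 1, 1⟩) fun x x' => by ext <;> simp

variable (β) in
/-- The inclusion of the right factor. -/
def inr : Y →* HeisenbergGroup β :=
  MonoidHom.mk' (fun y => ⟨1, y, 1⟩) fun y y' => by ext <;> simp

variable (β) in
/-- The inclusion of the central factor. -/
def inZ : Z →* HeisenbergGroup β :=
  MonoidHom.mk' (fun z => ⟨1, 1, z⟩) fun z z' => by ext <;> simp

lemma commutatorElement_inl_inr (x : X) (y : Y) : ⁅inl β x, inr β y⁆ = inZ β (β x y) := by
  ext <;> simp [inl, inr, inZ, commutatorElement_def]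

lemma inl_mul_inr_mul_inZ (x : X) (y : Y) (z : Z) :
    inl β x * inr β y * inZ β ((β x y)⁻¹ * z) = ⟨x, y, z⟩ := by
  ext <;> simp [inl, inr, inZ]

lemma mk_mem_commutator (hβ : Subgroup.closure {z | ∃ x y, β x y = z} = ⊤) {x : X} {y : Y}
    (hx : x ∈ commutator X) (hy : y ∈ commutator Y) (z : Z) :
    (⟨x, y, z⟩ : HeisenbergGroup β) ∈ commutator (HeisenbergGroup β) := by
  have hinZ : ⊤ ≤ (commutator (HeisenbergGroup β)).comap (inZ β) := by
    rw [← hβ, Subgroup.closure_le]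
    rintro _ ⟨a, b, rfl⟩
    rw [SetLike.mem_coe, Subgroup.mem_comap, ← commutatorElement_inl_inr]
    exact Subgroup.commutator_mem_commutator trivial trivial
  rw [← inl_mul_inr_mul_inZ]
  exact mul_mem (mul_mem (map_mem_commutator _ hx) (map_mem_commutator _ hy)) (hinZ trivial)

variable {A B : Type*} [Group A] [Group B]

/-- The projection of the Heisenberg group of a pulled back pairing onto the product of the
groups on which the pairing was originally defined. -/
def proj (pA : X →* A) (pB : Y →* B) (γ : A →* B →* Z) :
    HeisenbergGroup ((MonoidHom.compHom' pB).comp (γ.comp pA)) →* A × B :=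
  MonoidHom.mk' (fun g => (pA g.left, pB g.right)) fun g h => by simp

section Proj

variable {pA : X →* A} {pB : Y →* B} (hA : IsCentralExtension pA) (hB : IsCentralExtension pB)
  (γ : A →* B →* Z)

include hA hB

lemma isCentralExtension_proj : IsCentralExtension (proj pA pB γ) where
  surjective := fun ⟨a, b⟩ => by
    obtain ⟨x, rfl⟩ := hA.surjective a
    obtain ⟨y, rfl⟩ := hB.surjective b
    exact ⟨⟨x, y, 1⟩, rfl⟩
  ker_le_center g hg := by
    obtain ⟨hx, hy⟩ := Prod.mk_eq_one.1 hg
    have hxc := Subgroup.mem_center_iff.1 (hA.ker_le_center hx)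
    have hyc := Subgroup.mem_center_iff.1 (hB.ker_le_center hy)
    refine Subgroup.mem_center_iff.2 fun h => ?_
    ext <;> simp [hx, hy, hxc, hyc, mul_comm]

theorem card_mul_card_mul_card_dvd (hγ : Subgroup.closure {z | ∃ a b, γ a b = z} = ⊤) :
    Nat.card ↥(pA.ker ⊓ commutator X) * Nat.card ↥(pB.ker ⊓ commutator Y) * Nat.card Z ∣
      Nat.card (SchurMultiplier (A × B)) := by
  set β : X →* Y →* Z := (MonoidHom.compHom' pB).comp (γ.comp pA)
  have hβ : Subgroup.closure {z | ∃ x y, β x y = z} = ⊤ := by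
    rw [← hγ]
    congr 1
    ext z
    exact (hA.surjective.exists.trans (exists_congr fun _ => hB.surjective.exists)).symm
  let ι : ↥(pA.ker ⊓ commutator X) × ↥(pB.ker ⊓ commutator Y) × Z →*
      ↥((proj pA pB γ).ker ⊓ commutator (HeisenbergGroup β)) :=
    MonoidHom.mk' (fun w => ⟨⟨w.1, w.2.1, w.2.2⟩,
      Prod.mk_eq_one.2 ⟨w.1.2.1, w.2.1.2.1⟩, mk_mem_commutator hβ w.1.2.2 w.2.1.2.2 w.2.2⟩)
    fun w w' => by
      have hw : pA w.1 = 1 := w.1.2.1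
      ext <;> simp [β, hw]
  have hι : Function.Injective ι := fun w w' h => by
    obtain ⟨hx, hy, hz⟩ := HeisenbergGroup.ext_iff.1 (congrArg Subtype.val h)
    exact Prod.ext (Subtype.ext hx) (Prod.ext (Subtype.ext hy) hz)
  rw [mul_assoc, ← Nat.card_prod, ← Nat.card_prod]
  exact (Subgroup.card_dvd_of_injective ι hι).trans
    (isCentralExtension_proj hA hB γ).card_ker_inf_commutator_dvd

end Proj

end HeisenbergGroup

theorem card_schurMultiplier_prod (A B : Type*) [Group A] [Group B] :
    Nat.card (SchurMultiplier (A × B)) = Nat.card (SchurMultiplier A) *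
      Nat.card (SchurMultiplier B) * Nat.card (AbelianizationTensor A B) := by
  refine Nat.dvd_antisymm ?_ ?_
  · rw [← card_ker_inf_commutator_hopfExtension (A × B)]
    exact (isCentralExtension_hopfExtension (A × B)).card_ker_inf_commutator_prod_dvd
  · rw [← card_ker_inf_commutator_hopfExtension A, ← card_ker_inf_commutator_hopfExtension B]
    exact HeisenbergGroup.card_mul_card_mul_card_dvd (isCentralExtension_hopfExtension A)
      (isCentralExtension_hopfExtension B) (AbelianizationTensor.mk A B)
      AbelianizationTensor.closure_mk_eq_top

section ElementaryFactor

variable {G : Type*} [Group G] {m : ℕ} {M : Type*} [AddCommGroup M] [Module (ZMod m) M]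

lemma card_abelianizationTensor {H N : Type*} [Group H] [AddCommGroup N] [Module (ZMod m) N]
    (e : Abelianization G ≃* Multiplicative M) (f : Abelianization H ≃* Multiplicative N) :
    Nat.card (AbelianizationTensor G H) = Nat.card (M ⊗[ZMod m] N) := by
  have : TensorProduct.CompatibleSMul ℤ (ZMod m) M N :=
    .of_algebraMap_surjective M N (ZMod.ringHom_surjective (algebraMap ℤ (ZMod m)))
  exact Nat.card_congr <| Multiplicative.toAdd.trans <|
    (TensorProduct.congr (MulEquiv.toAdditiveLeft e).toIntLinearEquiv
      (MulEquiv.toAdditiveLeft f).toIntLinearEquiv).toEquiv.trans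
      (TensorProduct.equivOfCompatibleSMul (ZMod m) ℤ ℤ M N).toEquiv

lemma card_abelianizationTensor_pi_zmod (e : Abelianization G ≃* Multiplicative M) (k : ℕ) :
    Nat.card (AbelianizationTensor G (Fin k → Multiplicative (ZMod m))) = Nat.card M ^ k := by
  let f : Abelianization (Fin k → Multiplicative (ZMod m)) ≃* Multiplicative (Fin k → ZMod m) :=
    Abelianization.equivOfComm.symm.trans (MulEquiv.piMultiplicative fun _ => ZMod m).symm
  rw [card_abelianizationTensor (m := m) e f, ← Nat.card_fin k, ← Nat.card_fun, Nat.card_fin]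
  exact Nat.card_congr (TensorProduct.piScalarRight (ZMod m) (ZMod m) M (Fin k)).toEquiv

theorem card_schurMultiplier_pi_zmod (m k : ℕ) :
    Nat.card (SchurMultiplier (Fin k → Multiplicative (ZMod m))) = m ^ k.choose 2 := by
  induction k with
  | zero => rw [card_schurMultiplier_of_isCyclic, Nat.choose_zero_succ, pow_zero]
  | succ k ih =>
    have hA : Nat.card (AbelianizationTensor (Multiplicative (ZMod m))
        (Fin k → Multiplicative (ZMod m))) = m ^ k := by
      rw [card_abelianizationTensor_pi_zmod Abelianization.equivOfComm.symm, Nat.card_zmod]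
    let e : (Fin (k + 1) → Multiplicative (ZMod m)) ≃*
        Multiplicative (ZMod m) × (Fin k → Multiplicative (ZMod m)) :=
      ⟨(Fin.consEquiv fun _ => Multiplicative (ZMod m)).symm, fun _ _ => rfl⟩
    rw [card_schurMultiplier_congr e, card_schurMultiplier_prod, card_schurMultiplier_of_isCyclic,
      ih, hA, one_mul, ← pow_add, Nat.choose_succ_succ, Nat.choose_one_right, add_comm]

theorem card_schurMultiplier_prod_pi_zmod (e : Abelianization G ≃* Multiplicative M) (k : ℕ) :
    Nat.card (SchurMultiplier (G × (Fin k → Multiplicative (ZMod m)))) =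
      Nat.card (SchurMultiplier G) * m ^ k.choose 2 * Nat.card M ^ k := by
  rw [card_schurMultiplier_prod, card_schurMultiplier_pi_zmod,
    card_abelianizationTensor_pi_zmod e]

end ElementaryFactor

section QuaternionMultiplier

open QuaternionGroup

lemma quaternionGroup_a_one_zpow {n : ℕ} (i : ℤ) : (a 1 : QuaternionGroup n) ^ i = a i := by
  cases i with
  | ofNat i => simp
  | negSucc i =>
    rw [zpow_negSucc, a_one_pow, Int.cast_negSucc]
    rfl

lemma quaternionGroup_commutatorElement_xa_a {n : ℕ} (i j : ZMod (2 * n)) :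
    ⁅(xa i : QuaternionGroup n), a j⁆ = a (-2 * j) := by
  rw [commutatorElement_def, mul_inv_eq_iff_eq_mul, mul_inv_eq_iff_eq_mul]
  simp only [xa_mul_a, a_mul_a, a_mul_xa]
  ring_nf

namespace IsCentralExtension

variable {n : ℕ} {E : Type*} [Group E] {p : E →* QuaternionGroup n} {t u : E}

lemma commutatorElement_lift_xa_zero_zpow (hp : IsCentralExtension p) (ht : p t = a 1)
    (hu : p u = xa 0) (j : ℤ) : ⁅u, t ^ j⁆ = ⁅u, t⁆ ^ j := by
  have hpt : p (u * t * u⁻¹) = p t⁻¹ := by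
    rw [map_mul, map_mul, map_inv, map_inv, ht, hu, mul_inv_eq_iff_eq_mul, eq_inv_mul_iff_mul_eq]
    simp
  have hcomm : Commute (u * t * u⁻¹) t⁻¹ := by
    rw [← commutatorElement_eq_one_iff_commute, hp.commutatorElement_congr hpt rfl,
      commutatorElement_self]
  rw [commutatorElement_def, commutatorElement_def, hcomm.mul_zpow, conj_zpow, inv_zpow]

lemma commutatorElement_lift_xa_zpow (hp : IsCentralExtension p) (ht : p t = a 1)
    (hu : p u = xa 0) {x : E} {i : ℤ} (hx : p x = xa i) (j : ℤ) : ⁅x, t ^ j⁆ = ⁅u, t⁆ ^ j := by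
  have hpx : p x = p (u * t ^ i) := by
    rw [hx, map_mul, map_zpow, ht, hu, quaternionGroup_a_one_zpow, xa_mul_a, zero_add]
  calc ⁅x, t ^ j⁆ = ⁅u * t ^ i, t ^ j⁆ := hp.commutatorElement_congr hpx rfl
    _ = ⁅u, t ^ j⁆ := by simp only [commutatorElement_def]; group
    _ = ⁅u, t⁆ ^ j := hp.commutatorElement_lift_xa_zero_zpow ht hu j

lemma commutator_quaternionGroup_le_zpowers (hp : IsCentralExtension p) (ht : p t = a 1)
    (hu : p u = xa 0) : commutator E ≤ Subgroup.zpowers ⁅u, t⁆ := by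
  have hpt (i : ℤ) : p (t ^ i) = a i := by rw [map_zpow, ht, quaternionGroup_a_one_zpow]
  refine Subgroup.commutator_le.2 fun x _ y _ => ?_
  obtain ⟨i, hx⟩ : ∃ i : ℤ, p x = a i ∨ p x = xa i := by
    rcases p x with i | i <;> obtain ⟨i, rfl⟩ := ZMod.intCast_surjective i <;> exact ⟨i, by simp⟩
  obtain ⟨j, hy⟩ : ∃ j : ℤ, p y = a j ∨ p y = xa j := by
    rcases p y with j | j <;> obtain ⟨j, rfl⟩ := ZMod.intCast_surjective j <;> exact ⟨j, by simp⟩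
  rcases hx with hx | hx <;> rcases hy with hy | hy
  · rw [hp.commutatorElement_congr (hx.trans (hpt i).symm) (hy.trans (hpt j).symm),
      commutatorElement_eq_one_iff_commute.2 (Commute.zpow_zpow_self t i j)]
    exact one_mem _
  · rw [← commutatorElement_inv y x, hp.commutatorElement_congr rfl (hx.trans (hpt i).symm),
      hp.commutatorElement_lift_xa_zpow ht hu hy]
    exact inv_mem (Subgroup.zpow_mem_zpowers _ _)
  · rw [hp.commutatorElement_congr rfl (hy.trans (hpt j).symm),
      hp.commutatorElement_lift_xa_zpow ht hu hx]
    exact Subgroup.zpow_mem_zpowers _ _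
  · have hxy : p (y * x⁻¹) = p (t ^ (i - j)) := by
      rw [hpt, map_mul, map_inv, hx, hy, mul_inv_eq_iff_eq_mul, a_mul_xa]
      simp
    have hmul : ⁅x, y⁆ = ⁅x, y * x⁻¹⁆ := by simp only [commutatorElement_def]; group
    rw [hmul, hp.commutatorElement_congr rfl hxy, hp.commutatorElement_lift_xa_zpow ht hu hx]
    exact Subgroup.zpow_mem_zpowers _ _

lemma ker_inf_commutator_quaternionGroup_eq_bot (hp : IsCentralExtension p) :
    p.ker ⊓ commutator E = ⊥ := by
  obtain ⟨t, ht⟩ := hp.surjective (a 1)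
  obtain ⟨u, hu⟩ := hp.surjective (xa 0)
  have hpow : ⁅u, t⁆ ^ n = 1 := by
    have htn : p (t ^ n) = p (u ^ 2) := by rw [map_pow, map_pow, ht, hu, a_one_pow, xa_sq]
    rw [← zpow_natCast, ← hp.commutatorElement_lift_xa_zero_zpow ht hu, zpow_natCast,
      hp.commutatorElement_congr rfl htn]
    exact commutatorElement_eq_one_iff_commute.2 (Commute.self_pow u 2)
  have hps (k : ℤ) : p (⁅u, t⁆ ^ k) = a ((-2 * k : ℤ) : ZMod (2 * n)) := by
    have hp_comm : p ⁅u, t⁆ = a 1 ^ (-2 : ℤ) := by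
      rw [map_commutatorElement, ht, hu, quaternionGroup_commutatorElement_xa_a,
        quaternionGroup_a_one_zpow, mul_one, Int.cast_neg, Int.cast_ofNat]
    rw [map_zpow, hp_comm, ← zpow_mul, quaternionGroup_a_one_zpow]
  refine eq_bot_iff.2 ?_
  rintro w ⟨hw, hwE⟩
  obtain ⟨k, rfl⟩ := hp.commutator_quaternionGroup_le_zpowers ht hu hwE
  have hk : (n : ℤ) ∣ k := by
    have hak : ((-2 * k : ℤ) : ZMod (2 * n)) = 0 := a.inj ((hps k).symm.trans hw)
    rw [ZMod.intCast_zmod_eq_zero_iff_dvd] at hak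
    push_cast at hak
    rwa [neg_mul, dvd_neg, mul_dvd_mul_iff_left two_ne_zero] at hak
  obtain ⟨l, rfl⟩ := hk
  exact Subgroup.mem_bot.2 ((zpow_mul _ _ _).trans (by rw [zpow_natCast, hpow, one_zpow]))

end IsCentralExtension

theorem card_schurMultiplier_quaternionGroup (n : ℕ) :
    Nat.card (SchurMultiplier (QuaternionGroup n)) = 1 := by
  rw [← card_ker_inf_commutator_hopfExtension,
    (isCentralExtension_hopfExtension _).ker_inf_commutator_quaternionGroup_eq_bot,
    Subgroup.card_bot]

end QuaternionMultiplier

section QuaternionAbelianization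

open QuaternionGroup

variable {m : ℕ}

/-- For even `m`, the epimorphism of `QuaternionGroup m` onto `(ℤ/2)²` recording the parity of the
exponent of `a` and the presence of the factor `x`; it is the abelianization. -/
def quaternionParity (hm : Even m) : QuaternionGroup m →* Multiplicative (ZMod 2 × ZMod 2) :=
  let parity := ZMod.castHom (dvd_mul_right 2 m) (ZMod 2)
  have parity_natCast : parity m = 0 := by
    rw [map_natCast, ZMod.natCast_eq_zero_iff]; exact hm.two_dvd
  MonoidHom.mk' (fun
    | a i => .ofAdd (parity i, 0)
    | xa i => .ofAdd (parity i, 1)) <| by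
    have sub_eq_add_swap (c d : ZMod 2) : c - d = d + c := by rw [CharTwo.sub_eq_add, add_comm]
    rintro (i | i) (j | j)
    · simp only [a_mul_a, map_add]; rfl
    · simp only [a_mul_xa, map_sub, sub_eq_add_swap]; rfl
    · simp only [xa_mul_a, map_add]; rfl
    · simp only [xa_mul_xa, map_sub, map_add, parity_natCast, zero_add, sub_eq_add_swap]
      exact congrArg Multiplicative.ofAdd (Prod.ext rfl (CharTwo.add_self_eq_zero 1).symm)

lemma quaternionParity_surjective (hm : Even m) : Function.Surjective (quaternionParity hm) := by
  rintro ⟨i, j⟩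
  obtain ⟨i, rfl⟩ := ZMod.castHom_surjective (dvd_mul_right 2 m) i
  fin_cases j
  exacts [⟨a i, rfl⟩, ⟨xa i, rfl⟩]

lemma ker_quaternionParity (hm : Even m) :
    (quaternionParity hm).ker = commutator (QuaternionGroup m) := by
  refine le_antisymm ?_ (Abelianization.commutator_subset_ker _)
  rintro (i | i) hi
  · obtain ⟨k, rfl⟩ := ZMod.intCast_surjective i
    obtain ⟨l, rfl⟩ : 2 ∣ k := by
      have hk : ZMod.castHom (dvd_mul_right 2 m) (ZMod 2) k = 0 := congrArg (·.toAdd.1) hi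
      rwa [map_intCast, ZMod.intCast_zmod_eq_zero_iff_dvd] at hk
    have hcomm : a ((2 * l : ℤ) : ZMod (2 * m)) =
        ⁅(xa 0 : QuaternionGroup m), (a (-l) : QuaternionGroup m)⁆ := by
      rw [quaternionGroup_commutatorElement_xa_a, neg_mul_neg, Int.cast_mul, Int.cast_ofNat]
    exact hcomm ▸ Subgroup.commutator_mem_commutator trivial trivial
  · exact absurd (congrArg (·.toAdd.2) hi) one_ne_zero

/-- The abelianization of the quaternion group of order `4 * m` is elementary abelian of order `4`
when `m` is even. -/
noncomputable def quaternionAbelianizationEquiv (hm : Even m) :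
    Abelianization (QuaternionGroup m) ≃* Multiplicative (ZMod 2 × ZMod 2) :=
  (QuotientGroup.quotientMulEquivOfEq (ker_quaternionParity hm).symm).trans
    (QuotientGroup.quotientKerEquivOfSurjective _ (quaternionParity_surjective hm))

end QuaternionAbelianization

theorem schurMultiplier_quaternion_times_elementary_general {m n : ℕ} (hm : Even m) (hn : 3 ≤ n) :
    Nat.card (SchurMultiplier (QuaternionGroup m × (Fin (n - 3) → Multiplicative (ZMod 2)))) =
      2 ^ ((n - 1) * (n - 2) / 2 - 1) := by
  obtain ⟨k, rfl⟩ := Nat.exists_eq_add_of_le' hn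
  rw [Nat.add_sub_cancel, card_schurMultiplier_prod_pi_zmod (quaternionAbelianizationEquiv hm) k,
    card_schurMultiplier_quaternionGroup, Nat.card_prod, Nat.card_zmod]
  have hexp : (k + 2) * (k + 1) / 2 - 1 = k.choose 2 + 2 * k := by
    have hchoose : (k + 2).choose 2 = (k + 2) * (k + 1) / 2 := Nat.choose_two_right (k + 2)
    have hpascal : (k + 2).choose 2 = k + 1 + (k + k.choose 2) := by
      rw [Nat.choose_succ_succ' (k + 1) 1, Nat.choose_succ_succ' k 1, Nat.choose_one_right,
        Nat.choose_one_right]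
    omega
  calc 1 * 2 ^ k.choose 2 * (2 * 2) ^ k
    _ = 2 ^ (k.choose 2 + 2 * k) := by rw [one_mul, ← sq, ← pow_mul, ← pow_add]
    _ = 2 ^ ((k + 2) * (k + 1) / 2 - 1) := by rw [hexp]

/-- The Schur multiplier of `Q₈ × ℤ₂^(n-3)` (`n ≥ 3`) has order
`2^((n-1)(n-2)/2 - 1)`. -/
theorem schurMultiplier_quaternion_times_elementary {n : ℕ} (hn : 3 ≤ n) :
    Nat.card (SchurMultiplier
        (QuaternionGroup 2 × (Fin (n - 3) → Multiplicative (ZMod 2)))) =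
      2 ^ ((n - 1) * (n - 2) / 2 - 1) :=
  schurMultiplier_quaternion_times_elementary_general even_two hn
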